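/- Self-testing of post-selected teleportation implementations: let A, B be nonempty finite types with d_A = |A|, let T ∈ Matrix (A × B) (A × B) ℂ be a POVM element, E ∈ Matrix (B × A) (B × A) ℂ a density matrix, and p ∈ (0,1]. Then (T,E) is a post-selected teleportation protocol with success probability p if and only if |B| ≥ |A| and there exist: nonzero real coefficients λ : A → ℝ with Σ_k λ_k² = 1 and Σ_k 1/λ_k² ≤ 1/p; a nonempty finite type B'; an orthonormal basis (e_k)_{k ∈ A} of ℂ^A; and an orthonormal family (f_k)_{k ∈ A} in ℂ^{B × B'}; such that, setting |λ⟩ = Σ_k λ_k (f_k ⊗ e_k) ∈ ℂ^{(B × B') × A}, |τ⟩ = √p Σ_k (1/λ_k) (e_k ⊗ f_k) ∈ ℂ^{A × (B × B')}, and Π = Σ_k f_k f_k† (an orthogonal projection on ℂ^{B × B'}), one has: E equals the partial trace over B' of the rank-one projector |λ⟩⟨λ| (i.e. E((b,c),(b',c')) = Σ_{y ∈ B'} ⟨λ⟩(((b,y),c)) · conj(⟨λ⟩(((b',y),c')))), and (1_A ⊗ Π) · (T ⊗ 1_{B'}) · (1_A ⊗ Π) = |τ⟩⟨τ| as matrices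 on ℂ^{A × (B × B')}. -/

import Mathlib

open scoped BigOperators ComplexOrder

/-- The map `Φ_{T,E}` sending `ρ` on system `A` to the partial trace over `A` and `B`
of `T · (ρ ⊗ E)`, where `T` acts on `A ⊗ B` and `E` on `B ⊗ C` with `C ≅ A`. -/
noncomputable def teleMap {A B : Type*} [Fintype A] [Fintype B]
    (T : Matrix (A × B) (A × B) ℂ) (E : Matrix (B × A) (B × A) ℂ)
    (ρ : Matrix A A ℂ) : Matrix A A ℂ :=
  Matrix.of fun c c' => ∑ a : A, ∑ a' : A, ∑ b : B, ∑ b' : B,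
    T (a, b) (a', b') * ρ a' a * E (b', c) (b, c')

/-- A density matrix: positive semidefinite with trace one. -/
def IsDensityMatrix {A : Type*} [Fintype A] (ρ : Matrix A A ℂ) : Prop :=
  ρ.PosSemidef ∧ ρ.trace = 1

/-- A POVM element: positive semidefinite and below the identity. -/
def IsPOVMElement {A : Type*} [Fintype A] [DecidableEq A] (T : Matrix A A ℂ) : Prop :=
  T.PosSemidef ∧ (1 - T).PosSemidef

/-- `(T, E)` is a post-selected teleportation protocol with success probability `p ∈ (0,1]`. -/
def IsPSTeleportation {A B : Type*} [Fintype A] [Fintype B] [DecidableEq A] [DecidableEq B]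
    (T : Matrix (A × B) (A × B) ℂ) (E : Matrix (B × A) (B × A) ℂ) (p : ℝ) : Prop :=
  IsPOVMElement T ∧ IsDensityMatrix E ∧ 0 < p ∧ p ≤ 1 ∧
    ∀ ρ : Matrix A A ℂ, IsDensityMatrix ρ → teleMap T E ρ = (p : ℂ) • ρ

/-- The block at `(a, a')` of the partial contraction of `T` with `E` over `B`. -/
noncomputable def teleBlock {A B : Type*} [Fintype B]
    (T : Matrix (A × B) (A × B) ℂ) (E : Matrix (B × A) (B × A) ℂ) (a a' : A) : Matrix A A ℂ :=
  Matrix.of fun c' c => ∑ b : B, ∑ b' : B, T (a, b) (a', b') * E (b', c) (b, c')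

/-- The block at `(a, a')` of `T ⊗ 1` with ancilla indexed by `C`. -/
def ancillaBlock {A B : Type*} (C : Type*) [DecidableEq C]
    (T : Matrix (A × B) (A × B) ℂ) (a a' : A) : Matrix (B × C) (B × C) ℂ :=
  Matrix.of fun x x' => T (a, x.1) (a', x'.1) * (if x.2 = x'.2 then (1 : ℂ) else 0)

section Teleportation

open Matrix

variable {A B C : Type*} [Fintype A] [Fintype B] [Fintype C]

omit [Fintype A] in
lemma Matrix.conjTranspose_diagonal_ofReal [DecidableEq A] (d : A → ℝ) :
    (Matrix.diagonal fun k => (d k : ℂ))ᴴ = Matrix.diagonal fun k => (d k : ℂ) := by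
  rw [Matrix.diagonal_conjTranspose]
  congr 1
  ext k
  simp

lemma Matrix.eq_zero_of_forall_star_dotProduct_mulVec [DecidableEq A] {S : Matrix A A ℂ}
    (h : ∀ v : A → ℂ, star v ⬝ᵥ (S *ᵥ v) = 0) : S = 0 := by
  have h0 : Matrix.toEuclideanLin S = 0 := by
    rw [← inner_map_self_eq_zero]
    intro x
    rw [EuclideanSpace.inner_eq_star_dotProduct]
    rw [Matrix.toLpLin_apply, dotProduct_comm, Matrix.star_dotProduct, h, star_zero]
  simpa using h0

lemma teleMap_apply (T : Matrix (A × B) (A × B) ℂ) (E : Matrix (B × A) (B × A) ℂ)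
    (ρ : Matrix A A ℂ) (c c' : A) :
    teleMap T E ρ c c' = ∑ a, ∑ a', teleBlock T E a a' c' c * ρ a' a := by
  simp only [teleMap, teleBlock, Matrix.of_apply, Finset.sum_mul]
  refine Finset.sum_congr rfl fun a _ => Finset.sum_congr rfl fun a' _ =>
    Finset.sum_congr rfl fun b _ => Finset.sum_congr rfl fun b' _ => by ring

lemma teleMap_smul (T : Matrix (A × B) (A × B) ℂ) (E : Matrix (B × A) (B × A) ℂ)
    (r : ℂ) (ρ : Matrix A A ℂ) : teleMap T E (r • ρ) = r • teleMap T E ρ := by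
  ext c c'
  simp only [teleMap_apply, Matrix.smul_apply, smul_eq_mul, Finset.mul_sum]
  refine Finset.sum_congr rfl fun a _ => Finset.sum_congr rfl fun a' _ => by ring

lemma teleMap_eq_smul_of_posSemidef [DecidableEq A] {T : Matrix (A × B) (A × B) ℂ}
    {E : Matrix (B × A) (B × A) ℂ} {p : ℂ}
    (h : ∀ ρ : Matrix A A ℂ, IsDensityMatrix ρ → teleMap T E ρ = p • ρ)
    {ρ : Matrix A A ℂ} (hρ : ρ.PosSemidef) : teleMap T E ρ = p • ρ := by
  by_cases h0 : ρ.trace = 0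
  · rw [hρ.trace_eq_zero_iff] at h0
    subst h0
    ext c c'
    simp [teleMap_apply]
  · have hd : IsDensityMatrix (ρ.trace⁻¹ • ρ) :=
      ⟨hρ.smul (inv_nonneg.mpr hρ.trace_nonneg), by simp [Matrix.trace_smul, h0]⟩
    have := h _ hd
    rw [teleMap_smul, smul_comm] at this
    exact smul_right_injective _ (inv_ne_zero h0) this

/-- A pair `(T, E)` teleports every density matrix iff its contraction is a multiple of the
(unnormalized) maximally entangled projector. -/
lemma teleMap_eq_smul_iff [DecidableEq A] (T : Matrix (A × B) (A × B) ℂ)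
    (E : Matrix (B × A) (B × A) ℂ) (p : ℂ) :
    (∀ ρ : Matrix A A ℂ, IsDensityMatrix ρ → teleMap T E ρ = p • ρ) ↔
      ∀ a a', teleBlock T E a a' = p • Matrix.single a a' 1 := by
  constructor
  · intro h a a'
    ext c' c
    have hS : (Matrix.of fun i j => teleBlock T E i j c' c)
        - p • Matrix.single c' c (1 : ℂ) = 0 := by
      refine Matrix.eq_zero_of_forall_star_dotProduct_mulVec fun v => ?_
      have h1 := congrFun₂ (teleMap_eq_smul_of_posSemidef h
        (Matrix.posSemidef_vecMulVec_self_star v)) c c'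
      rw [teleMap_apply] at h1
      rw [Matrix.sub_mulVec, dotProduct_sub, sub_eq_zero]
      have h2 : star v ⬝ᵥ ((p • Matrix.single c' c (1 : ℂ)) *ᵥ v) = p * (v c * star (v c')) := by
        simp only [Matrix.smul_mulVec, Matrix.single_mulVec, dotProduct_smul, smul_eq_mul]
        simp [Function.update_apply, dotProduct, mul_comm]
      rw [h2]
      simp only [Matrix.smul_apply, Matrix.vecMulVec_apply, smul_eq_mul, Pi.star_apply] at h1
      rw [← h1]
      simp only [dotProduct, Matrix.mulVec, Finset.mul_sum, Matrix.of_apply, Pi.star_apply]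
      refine Finset.sum_congr rfl fun a _ => Finset.sum_congr rfl fun a' _ => by ring
    have := congrFun₂ hS a a'
    simp only [Matrix.sub_apply, Matrix.of_apply, Matrix.zero_apply, sub_eq_zero] at this
    rw [this]
    simp [Matrix.single_apply, eq_comm]
  · intro h ρ _
    ext c c'
    simp [teleMap_apply, h, Matrix.single_apply, ite_and, Finset.sum_ite_eq']

omit [Fintype A] in
lemma conj_ancillaBlock_apply [DecidableEq C] {X Y : Type*}
    (T : Matrix (A × B) (A × B) ℂ) (a a' : A)
    (L : Matrix (B × C) X ℂ) (M : Matrix (B × C) Y ℂ) (i : X) (j : Y) :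
    (Lᴴ * ancillaBlock C T a a' * M) i j =
      ∑ y, ∑ b, ∑ b', star (L (b, y) i) * T (a, b) (a', b') * M (b', y) j := by
  simp only [ancillaBlock, Matrix.of_apply, Matrix.mul_apply, Fintype.sum_prod_type,
    Matrix.conjTranspose_apply, mul_ite, mul_one, mul_zero, Finset.sum_ite_eq',
    Finset.mem_univ, if_true, Finset.sum_mul]
  rw [Finset.sum_comm]
  refine Finset.sum_congr rfl fun y _ => Finset.sum_comm

omit [Fintype A] in
/-- Contraction of `T` with a purified state. -/
lemma teleBlock_eq_of_purification [DecidableEq C] {T : Matrix (A × B) (A × B) ℂ}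
    {E : Matrix (B × A) (B × A) ℂ} (L : Matrix (B × C) A ℂ)
    (hL : ∀ b c b' c', E (b, c) (b', c') = ∑ y, L (b, y) c * star (L (b', y) c')) (a a' : A) :
    teleBlock T E a a' = Lᴴ * ancillaBlock C T a a' * L := by
  ext c' c
  simp only [conj_ancillaBlock_apply, teleBlock, Matrix.of_apply, hL, Finset.mul_sum]
  rw [Finset.sum_comm_cycle]
  refine Finset.sum_congr rfl fun y _ => Finset.sum_congr rfl fun b _ =>
    Finset.sum_congr rfl fun b' _ => by ring

/-- Singular value decomposition of a matrix with trivial kernel. -/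
lemma Matrix.exists_svd_of_injective [DecidableEq A] {X : Type*} [Fintype X] (L : Matrix X A ℂ)
    (hL : Function.Injective L.mulVec) :
    ∃ (lam : A → ℝ) (F : Matrix X A ℂ) (U : Matrix A A ℂ), (∀ k, lam k ≠ 0) ∧ Fᴴ * F = 1 ∧
      U * Uᴴ = 1 ∧ L = F * Matrix.diagonal (fun k => (lam k : ℂ)) * U := by
  have hP := Matrix.PosDef.conjTranspose_mul_self L hL
  set V : Matrix A A ℂ := (hP.1.eigenvectorUnitary : Matrix A A ℂ) with hV
  have hV1 : Vᴴ * V = 1 := Unitary.coe_star_mul_self hP.1.eigenvectorUnitary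
  have hV2 : V * Vᴴ = 1 := Unitary.coe_mul_star_self hP.1.eigenvectorUnitary
  set lam : A → ℝ := fun k => Real.sqrt (hP.1.eigenvalues k) with hlam
  have hl0 : ∀ k, lam k ≠ 0 := fun k => (Real.sqrt_pos.mpr (hP.eigenvalues_pos k)).ne'
  have hsq : ∀ k, (lam k : ℂ) * lam k = hP.1.eigenvalues k := fun k => by
    rw [← Complex.ofReal_mul, Real.mul_self_sqrt (hP.eigenvalues_pos k).le]
  set D := Matrix.diagonal (fun k => (lam k : ℂ)) with hD
  set I := Matrix.diagonal (fun k => (lam k : ℂ)⁻¹) with hI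
  have hID : I * D = 1 := by
    simp [hI, hD, Matrix.diagonal_mul_diagonal, hl0]
  have hDI : D * I = 1 := by
    simp [hI, hD, Matrix.diagonal_mul_diagonal, hl0]
  have hIH : Iᴴ = I := by
    rw [hI, Matrix.diagonal_conjTranspose]
    congr 1
    ext k
    simp
  have hspec : Lᴴ * L = V * (D * D) * Vᴴ := by
    have h1 := hP.1.spectral_theorem
    rw [Unitary.conjStarAlgAut_apply] at h1
    rw [hD, Matrix.diagonal_mul_diagonal]
    simp only [hsq]
    exact h1
  refine ⟨lam, L * V * I, Vᴴ, hl0, ?_, by simpa using hV1, ?_⟩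
  · calc (L * V * I)ᴴ * (L * V * I) = I * (Vᴴ * (Lᴴ * L) * V) * I := by
          simp only [Matrix.conjTranspose_mul, hIH, Matrix.mul_assoc]
      _ = I * ((Vᴴ * V) * (D * D) * (Vᴴ * V)) * I := by
          rw [hspec]; simp only [Matrix.mul_assoc]
      _ = (I * D) * (D * I) := by rw [hV1]; simp only [Matrix.mul_assoc, Matrix.one_mul,
            Matrix.mul_one]
      _ = 1 := by rw [hID, hDI, Matrix.one_mul]
  · rw [Matrix.mul_assoc (L * V), hID, Matrix.mul_one, Matrix.mul_assoc, hV2, Matrix.mul_one]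

/-- The compression of `T ⊗ 1` by `1 ⊗ F Fᴴ` is the rank-one projector with coefficients `u`
iff each block compressed by `F` is. -/
lemma ancilla_conj_eq_iff [DecidableEq A] [DecidableEq C]
    (T : Matrix (A × B) (A × B) ℂ) (F : Matrix (B × C) A ℂ)
    (hF : Fᴴ * F = 1) (u : A → A → ℂ) :
    ((Matrix.of fun z z' : A × (B × C) => (if z.1 = z'.1 then (1 : ℂ) else 0) *
          ∑ k : A, F z.2 k * (starRingEnd ℂ) (F z'.2 k)) *
       (Matrix.of fun z z' : A × (B × C) =>
          T (z.1, z.2.1) (z'.1, z'.2.1) * (if z.2.2 = z'.2.2 then (1 : ℂ) else 0)) *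
       (Matrix.of fun z z' : A × (B × C) => (if z.1 = z'.1 then (1 : ℂ) else 0) *
          ∑ k : A, F z.2 k * (starRingEnd ℂ) (F z'.2 k))
      = Matrix.of fun z z' : A × (B × C) =>
          (∑ k, u k z.1 * F z.2 k) * (starRingEnd ℂ) (∑ k, u k z'.1 * F z'.2 k)) ↔
    ∀ a a', Fᴴ * ancillaBlock C T a a' * F =
      Matrix.of fun k l => u k a * (starRingEnd ℂ) (u l a') := by
  have hl : ∀ (a a' : A) (x x' : B × C),
      ((Matrix.of fun z z' : A × (B × C) => (if z.1 = z'.1 then (1 : ℂ) else 0) *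
          ∑ k : A, F z.2 k * (starRingEnd ℂ) (F z'.2 k)) *
       (Matrix.of fun z z' : A × (B × C) =>
          T (z.1, z.2.1) (z'.1, z'.2.1) * (if z.2.2 = z'.2.2 then (1 : ℂ) else 0)) *
       (Matrix.of fun z z' : A × (B × C) => (if z.1 = z'.1 then (1 : ℂ) else 0) *
          ∑ k : A, F z.2 k * (starRingEnd ℂ) (F z'.2 k))) (a, x) (a', x') =
      ((F * Fᴴ) * ancillaBlock C T a a' * (F * Fᴴ)) x x' := by
    intro a a' x x'
    have hP : ∀ y y', ∑ k, F y k * (starRingEnd ℂ) (F y' k) = (F * Fᴴ) y y' := fun y y' => by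
      simp [Matrix.mul_apply]
    have hT' : ∀ a a' y y', T (a, (y : B × C).1) (a', (y' : B × C).1) *
        (if y.2 = y'.2 then (1 : ℂ) else 0) = ancillaBlock C T a a' y y' := fun _ _ _ _ => rfl
    simp only [hP]
    generalize F * Fᴴ = P
    rw [Matrix.mul_apply, Matrix.mul_apply, Fintype.sum_prod_type]
    simp only [Matrix.mul_apply (M := Matrix.of _), Matrix.of_apply, hT', ite_mul, one_mul,
      zero_mul, mul_ite, mul_zero, Fintype.sum_prod_type (α₁ := A), Finset.sum_ite_irrel,
      Finset.sum_const_zero, Finset.sum_ite_eq, Finset.sum_ite_eq', Finset.mem_univ, if_true,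
      Matrix.mul_apply]
  have hr : ∀ (a a' : A) (x x' : B × C),
      (∑ k, u k a * F x k) * (starRingEnd ℂ) (∑ k, u k a' * F x' k) =
        (F * (Matrix.of fun k l => u k a * (starRingEnd ℂ) (u l a')) * Fᴴ) x x' := by
    intro a a' x x'
    simp only [Matrix.mul_apply, Matrix.of_apply, Matrix.conjTranspose_apply, map_sum, map_mul,
      Finset.mul_sum, Finset.sum_mul]
    refine Finset.sum_congr rfl fun k _ => Finset.sum_congr rfl fun l _ => ?_
    simp only [starRingEnd_apply]
    ring
  constructor
  · intro h a a'
    have h1 : (F * Fᴴ) * ancillaBlock C T a a' * (F * Fᴴ) =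
        F * (Matrix.of fun k l => u k a * (starRingEnd ℂ) (u l a')) * Fᴴ := by
      ext x x'
      rw [← hl, ← hr, h]
      rfl
    have h2 := congrArg (fun M => Fᴴ * M * F) h1
    simp only [Matrix.mul_assoc, hF, Matrix.mul_one] at h2
    simp only [← Matrix.mul_assoc, hF, Matrix.one_mul] at h2
    exact h2
  · intro h
    ext ⟨a, x⟩ ⟨a', x'⟩
    rw [hl, Matrix.of_apply, hr, ← h]
    simp only [Matrix.mul_assoc]

/-- Positivity of the compression of `T ⊗ 1` to a vector with components the columns of `G`. -/
lemma sum_ancillaBlock_nonneg [DecidableEq C] {T : Matrix (A × B) (A × B) ℂ} (hT : T.PosSemidef)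
    (G : Matrix (B × C) A ℂ) :
    0 ≤ ∑ a, ∑ a', (Gᴴ * ancillaBlock C T a a' * G) a a' := by
  have h : ∑ a, ∑ a', (Gᴴ * ancillaBlock C T a a' * G) a a' =
      ∑ y : C, star (fun z : A × B => G (z.2, y) z.1) ⬝ᵥ
        (T *ᵥ fun z : A × B => G (z.2, y) z.1) := by
    simp only [conj_ancillaBlock_apply, dotProduct, Matrix.mulVec, Fintype.sum_prod_type,
      Pi.star_apply, Finset.mul_sum]
    rw [Finset.sum_comm_cycle]
    refine Finset.sum_congr rfl fun y _ => Finset.sum_congr rfl fun a _ => ?_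
    rw [Finset.sum_comm]
    refine Finset.sum_congr rfl fun b _ => Finset.sum_congr rfl fun a' _ =>
      Finset.sum_congr rfl fun b' _ => by ring
  rw [h]
  exact Finset.sum_nonneg fun y _ => hT.dotProduct_mulVec_nonneg _

lemma card_le_of_teleBlock_eq [DecidableEq A] [Nonempty A] {T : Matrix (A × B) (A × B) ℂ}
    {E : Matrix (B × A) (B × A) ℂ}
    (hT : T.PosSemidef) (hE : E.PosSemidef) {p : ℂ} (hp : p ≠ 0)
    (h : ∀ a a', teleBlock T E a a' = p • Matrix.single a a' 1) :
    Fintype.card A ≤ Fintype.card B := by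
  obtain ⟨n, t, ht⟩ := Matrix.posSemidef_iff_eq_sum_vecMulVec.mp hT
  obtain ⟨m, v, hv⟩ := Matrix.posSemidef_iff_eq_sum_vecMulVec.mp hE
  let K : Fin n × Fin m → Matrix A A ℂ := fun s =>
    (Matrix.of fun (a : A) (b : B) => star (t s.1 (a, b))) *
      (Matrix.of fun (b : B) (c : A) => v s.2 (b, c))
  have hK : ∀ a a' c c', ∑ s, star (K s a c') * K s a' c =
      if a = c' ∧ a' = c then p else 0 := by
    intro a a' c c'
    have h1 := congrFun₂ (h a a') c' c
    simp only [Matrix.smul_apply, Matrix.single_apply, smul_eq_mul, mul_ite, mul_one,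
      mul_zero] at h1
    rw [← h1]
    simp only [teleBlock, Matrix.of_apply, ht, hv, Matrix.sum_apply, Matrix.vecMulVec_apply, K,
      Matrix.mul_apply, Fintype.sum_prod_type, star_sum, star_mul', star_star, Pi.star_apply,
      Fintype.sum_mul_sum]
    simp only [← Fintype.sum_prod_type']
    exact Fintype.sum_equiv ⟨fun x => (x.2.2.1, x.2.2.2, x.1, x.2.1),
      fun x => (x.2.2.1, x.2.2.2, x.1, x.2.1), fun _ => rfl, fun _ => rfl⟩ _ _
      fun x => by simp only [Equiv.coe_fn_mk]; ring
  have hzero : ∀ w : Fin n × Fin m → ℂ, ∑ s, star (w s) * w s = 0 → ∀ s, w s = 0 := by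
    intro w hw s
    exact congrFun (dotProduct_star_self_eq_zero.mp (by simpa [dotProduct, mul_comm] using hw)) s
  have hoff : ∀ a c, a ≠ c → ∀ s, K s a c = 0 := fun a c hac =>
    hzero (fun s => K s a c) (by rw [hK]; simp [hac])
  have hdiag : ∀ a a' s, K s a a = K s a' a' := fun a a' s => by
    refine sub_eq_zero.mp (hzero (fun s => K s a a - K s a' a') ?_ s)
    have h1 := hK a a a a
    have h2 := hK a a' a' a
    have h3 := hK a' a a a'
    have h4 := hK a' a' a' a'
    simp only [and_self, if_true] at h1 h2 h3 h4
    simp only [star_sub, sub_mul, mul_sub, Finset.sum_sub_distrib, h1, h2, h3, h4]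
    ring
  let a₀ : A := Classical.arbitrary A
  obtain ⟨s, hs⟩ : ∃ s, K s a₀ a₀ ≠ 0 := by
    by_contra! hc
    have := hK a₀ a₀ a₀ a₀
    simp [hc] at this
    exact hp this.symm
  have hKs : K s = K s a₀ a₀ • (1 : Matrix A A ℂ) := by
    ext a c
    by_cases hac : a = c
    · subst hac; simp [hdiag a a₀]
    · simp [hoff a c hac, hac]
  have hone : (1 : Matrix A A ℂ) =
      (Matrix.of fun (a : A) (b : B) => star (t s.1 (a, b))) *
      ((K s a₀ a₀)⁻¹ • Matrix.of fun (b : B) (c : A) => v s.2 (b, c)) := by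
    rw [Matrix.mul_smul]
    change _ = (K s a₀ a₀)⁻¹ • K s
    conv_rhs => rw [hKs]
    simp [smul_smul, hs]
  calc Fintype.card A = (1 : Matrix A A ℂ).rank := Matrix.rank_one.symm
    _ ≤ _ := by rw [hone]; exact Matrix.rank_mul_le_left _ _
    _ ≤ Fintype.card B := Matrix.rank_le_card_width _

lemma compression_eq_iff_of_svd [DecidableEq A] [DecidableEq C]
    (T : Matrix (A × B) (A × B) ℂ) {F : Matrix (B × C) A ℂ}
    {U : Matrix A A ℂ} {lam : A → ℝ} (hlam : ∀ k, lam k ≠ 0) (hU : U * Uᴴ = 1)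
    {p : ℝ} (hp : 0 ≤ p) (a a' : A) :
    (F * Matrix.diagonal (fun k => (lam k : ℂ)) * U)ᴴ * ancillaBlock C T a a' *
        (F * Matrix.diagonal (fun k => (lam k : ℂ)) * U) = (p : ℂ) • Matrix.single a a' 1 ↔
      Fᴴ * ancillaBlock C T a a' * F =
        Matrix.of fun k l => ((Real.sqrt p : ℂ) * (1 / (lam k : ℂ)) * U k a) *
          (starRingEnd ℂ) ((Real.sqrt p : ℂ) * (1 / (lam l : ℂ)) * U l a') := by
  have hU' : Uᴴ * U = 1 := mul_eq_one_comm.mp hU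
  set D := Matrix.diagonal (fun k => (lam k : ℂ)) with hD
  set W : Matrix A A ℂ := Matrix.of fun k l =>
    ((Real.sqrt p : ℂ) * (1 / (lam k : ℂ)) * U k a) *
      (starRingEnd ℂ) ((Real.sqrt p : ℂ) * (1 / (lam l : ℂ)) * U l a') with hW
  set I := Matrix.diagonal (fun k => (lam k : ℂ)⁻¹) with hI
  have hID : I * D = 1 := by simp [hI, hD, Matrix.diagonal_mul_diagonal, hlam]
  have hDI : D * I = 1 := by simp [hI, hD, Matrix.diagonal_mul_diagonal, hlam]
  have hDH : Dᴴ = D := Matrix.conjTranspose_diagonal_ofReal lam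
  have hsq : (Real.sqrt p : ℂ) * Real.sqrt p = p := by
    rw [← Complex.ofReal_mul, Real.mul_self_sqrt hp]
  have hDW : D * W * D = U * ((p : ℂ) • Matrix.single a a' 1) * Uᴴ := by
    ext k l
    have hk : (lam k : ℂ) ≠ 0 := Complex.ofReal_ne_zero.mpr (hlam k)
    have hl : (lam l : ℂ) ≠ 0 := Complex.ofReal_ne_zero.mpr (hlam l)
    have hr : (U * ((p : ℂ) • Matrix.single a a' 1) * Uᴴ : Matrix A A ℂ) k l =
        p * (U k a * star (U l a')) := by
      simp [Matrix.mul_apply, Matrix.single_apply, ite_and]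
      ring
    rw [hr, hD, Matrix.mul_diagonal, Matrix.diagonal_mul, ← hsq]
    simp only [hW, Matrix.of_apply, map_mul, map_div₀, map_one, Complex.conj_ofReal,
      starRingEnd_apply (U l a')]
    field_simp
  have hL : (F * D * U)ᴴ * ancillaBlock C T a a' * (F * D * U) =
      Uᴴ * (D * (Fᴴ * ancillaBlock C T a a' * F) * D) * U := by
    simp only [Matrix.conjTranspose_mul, hDH, Matrix.mul_assoc]
  rw [hL]
  constructor
  · intro h
    have h1 := congrArg (fun M => I * (U * M * Uᴴ) * I) h
    simp only [← hDW] at h1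
    have hcancel : ∀ M : Matrix A A ℂ, I * (D * M * D) * I = M := fun M => by
      calc I * (D * M * D) * I = (I * D) * M * (D * I) := by simp only [Matrix.mul_assoc]
        _ = M := by rw [hID, hDI, Matrix.one_mul, Matrix.mul_one]
    have hcancelU : ∀ M : Matrix A A ℂ, U * (Uᴴ * M * U) * Uᴴ = M := fun M => by
      calc U * (Uᴴ * M * U) * Uᴴ = (U * Uᴴ) * M * (U * Uᴴ) := by simp only [Matrix.mul_assoc]
        _ = M := by rw [hU, Matrix.one_mul, Matrix.mul_one]
    rwa [hcancelU, hcancel, hcancel] at h1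
  · intro h
    rw [h, hDW]
    calc Uᴴ * (U * ((p : ℂ) • Matrix.single a a' 1) * Uᴴ) * U
        = (Uᴴ * U) * ((p : ℂ) • Matrix.single a a' 1) * (Uᴴ * U) := by
          simp only [Matrix.mul_assoc]
      _ = _ := by rw [hU', Matrix.one_mul, Matrix.mul_one]

lemma sum_inv_sq_le_of_compression_eq [DecidableEq A] [DecidableEq B] [DecidableEq C] [Nonempty A]
    {T : Matrix (A × B) (A × B) ℂ}
    (hT : (1 - T).PosSemidef) {F : Matrix (B × C) A ℂ}
    {U : Matrix A A ℂ} {lam : A → ℝ} (hlam : ∀ k, lam k ≠ 0) (hF : Fᴴ * F = 1)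
    (hU : U * Uᴴ = 1) {p : ℝ} (hp : 0 < p)
    (h : ∀ a a', Fᴴ * ancillaBlock C T a a' * F =
        Matrix.of fun k l => ((Real.sqrt p : ℂ) * (1 / (lam k : ℂ)) * U k a) *
          (starRingEnd ℂ) ((Real.sqrt p : ℂ) * (1 / (lam l : ℂ)) * U l a')) :
    ∑ k, 1 / lam k ^ 2 ≤ 1 / p := by
  have hsq : (Real.sqrt p : ℂ) * Real.sqrt p = p := by
    rw [← Complex.ofReal_mul, Real.mul_self_sqrt hp.le]
  let J : Matrix A A ℂ := Matrix.of fun k a => 1 / (lam k : ℂ) * U k a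
  let N : A → ℂ := fun a => ∑ k, star (J k a) * J k a
  have hN : ∑ a, N a = ((∑ k, 1 / lam k ^ 2 : ℝ) : ℂ) := by
    simp only [N]
    rw [Finset.sum_comm, Complex.ofReal_sum]
    refine Finset.sum_congr rfl fun k _ => ?_
    have h1 := congrFun₂ hU k k
    simp only [Matrix.mul_apply, Matrix.conjTranspose_apply, Matrix.one_apply_eq] at h1
    calc ∑ a, star (J k a) * J k a = ∑ a, (1 / (lam k : ℂ)) ^ 2 * (U k a * star (U k a)) := by
          refine Finset.sum_congr rfl fun a _ => ?_
          simp only [J, Matrix.of_apply, ← starRingEnd_apply, map_mul, map_div₀, map_one,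
            Complex.conj_ofReal]
          ring
      _ = _ := by rw [← Finset.mul_sum, h1]; push_cast; ring
  have hblock : ∀ a a', ancillaBlock C (1 - T) a a' =
      (if a = a' then 1 else 0) - ancillaBlock C T a a' := by
    intro a a'
    ext ⟨b, y⟩ ⟨b', y'⟩
    by_cases h1 : a = a' <;> by_cases h2 : b = b' <;> by_cases h3 : y = y' <;>
      simp [ancillaBlock, h1, h2, h3, Matrix.one_apply]
  have hterm : ∀ a a', ((F * J)ᴴ * ancillaBlock C (1 - T) a a' * (F * J) : Matrix A A ℂ) a a' =
      (if a = a' then N a else 0) - p * (N a * N a') := by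
    intro a a'
    have h1 : (F * J)ᴴ * ancillaBlock C (1 - T) a a' * (F * J) =
        (if a = a' then Jᴴ * J else 0) - Jᴴ * (Fᴴ * ancillaBlock C T a a' * F) * J := by
      rw [hblock, Matrix.mul_sub, Matrix.sub_mul]
      congr 1
      · split_ifs
        · calc (F * J)ᴴ * (1 : Matrix (B × C) (B × C) ℂ) * (F * J) = Jᴴ * (Fᴴ * F) * J := by
                simp only [Matrix.conjTranspose_mul, Matrix.mul_assoc,
                  Matrix.one_mul]
            _ = _ := by rw [hF, Matrix.mul_one]
        · simp
      · simp only [Matrix.conjTranspose_mul, Matrix.mul_assoc]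
    rw [h1, h, Matrix.sub_apply]
    congr 1
    · split_ifs with h2
      · subst h2
        simp [Matrix.mul_apply, N]
      · rfl
    · rw [← hsq]
      simp only [Matrix.mul_apply, Matrix.of_apply, Matrix.conjTranspose_apply, N,
        Finset.mul_sum, Finset.sum_mul]
      refine Finset.sum_congr rfl fun k _ => Finset.sum_congr rfl fun l _ => ?_
      simp only [J, Matrix.of_apply, ← starRingEnd_apply, map_mul, Complex.conj_ofReal]
      ring
  have h0 := sum_ancillaBlock_nonneg (C := C) hT (F * J)
  simp only [hterm, Finset.sum_sub_distrib, Finset.sum_ite_eq, Finset.mem_univ, if_true,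
    ← Finset.mul_sum, ← Finset.sum_mul, hN] at h0
  have h1 : 0 ≤ (∑ k, 1 / lam k ^ 2) - p * ((∑ k, 1 / lam k ^ 2) * ∑ k, 1 / lam k ^ 2) := by
    exact_mod_cast h0
  have hpos : 0 < ∑ k, 1 / lam k ^ 2 :=
    Finset.sum_pos (fun k _ => by have := hlam k; positivity) Finset.univ_nonempty
  rw [le_div_iff₀ hp]
  nlinarith

lemma sum_sq_eq_one_of_purification [DecidableEq A]
    {E : Matrix (B × A) (B × A) ℂ} (hE : E.trace = 1)
    {F : Matrix (B × C) A ℂ} {U : Matrix A A ℂ} {lam : A → ℝ} (hF : Fᴴ * F = 1)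
    (hU : U * Uᴴ = 1) {L : Matrix (B × C) A ℂ}
    (hLF : L = F * Matrix.diagonal (fun k => (lam k : ℂ)) * U)
    (hL : ∀ b c b' c', E (b, c) (b', c') = ∑ y, L (b, y) c * star (L (b', y) c')) :
    ∑ k, lam k ^ 2 = 1 := by
  have h1 : E.trace = (L * Lᴴ).trace := by
    simp only [Matrix.trace, Matrix.diag_apply, Fintype.sum_prod_type, hL, Matrix.mul_apply,
      Matrix.conjTranspose_apply]
    exact Finset.sum_congr rfl fun b _ => Finset.sum_comm
  set D := Matrix.diagonal (fun k => (lam k : ℂ)) with hD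
  have hDH : Dᴴ = D := Matrix.conjTranspose_diagonal_ofReal lam
  have h2 : (L * Lᴴ).trace = (D * D).trace := by
    calc (L * Lᴴ).trace = (F * D * (U * Uᴴ) * D * Fᴴ).trace := by
          rw [hLF]
          simp only [Matrix.conjTranspose_mul, hDH, Matrix.mul_assoc]
      _ = (Fᴴ * (F * D * D)).trace := by rw [hU, Matrix.mul_one, Matrix.trace_mul_comm]
      _ = (D * D).trace := by rw [← Matrix.mul_assoc, ← Matrix.mul_assoc, hF, Matrix.one_mul]
  rw [hE, h2, hD, Matrix.diagonal_mul_diagonal, Matrix.trace_diagonal] at h1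
  have h3 : ((∑ k, lam k ^ 2 : ℝ) : ℂ) = 1 := by
    rw [h1]
    push_cast
    exact Finset.sum_congr rfl fun k _ => by ring
  exact_mod_cast h3

end Teleportation

/-- self-testing of post-selected teleportation implementations.
Given a POVM element `T`, a density matrix `E` and `p ∈ (0,1]`, the pair `(T,E)`
is a post-selected teleportation protocol with success probability `p` iff
`|B| ≥ |A|` and there exist nonzero real Schmidt coefficients `lam : A → ℝ` with
`∑ lam k ^ 2 = 1` and `∑ 1/lam k ^ 2 ≤ 1/p`, an ancilla `B' = Fin m` (nonempty finite),
an orthonormal basis `e` of `ℂ^A` and an orthonormal family `f` in `ℂ^{B × B'}`,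
such that `E` is the partial trace over `B'` of `|λ⟩⟨λ|` and
`(1_A ⊗ Π) (T ⊗ 1_{B'}) (1_A ⊗ Π) = |τ⟩⟨τ|`. -/
theorem self_testing_of_ps_teleportation
    {A B : Type*} [Fintype A] [Fintype B] [DecidableEq A] [DecidableEq B]
    [Nonempty A] [Nonempty B]
    (T : Matrix (A × B) (A × B) ℂ) (E : Matrix (B × A) (B × A) ℂ) (p : ℝ)
    (hT : IsPOVMElement T) (hE : IsDensityMatrix E) (hp0 : 0 < p) (hp1 : p ≤ 1) :
    (∀ ρ : Matrix A A ℂ, IsDensityMatrix ρ → teleMap T E ρ = (p : ℂ) • ρ)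
      ↔
    (Fintype.card A ≤ Fintype.card B ∧
      ∃ lam : A → ℝ,
        (∀ k, lam k ≠ 0) ∧
        (∑ k : A, lam k ^ 2) = 1 ∧
        (∑ k : A, 1 / lam k ^ 2) ≤ 1 / p ∧
        ∃ m : ℕ, 0 < m ∧
          ∃ (e : A → A → ℂ) (f : A → B × Fin m → ℂ),
            -- `e` is an orthonormal basis of `ℂ^A` (an orthonormal family of size `|A|`)
            (∀ k l : A, (∑ a : A, (starRingEnd ℂ) (e k a) * e l a)
                = if k = l then 1 else 0) ∧
            -- `f` is an orthonormal family in `ℂ^{B × B'}`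
            (∀ k l : A, (∑ x : B × Fin m, (starRingEnd ℂ) (f k x) * f l x)
                = if k = l then 1 else 0) ∧
            -- `E` is the partial trace over `B'` of `|λ⟩⟨λ|`,
            -- where `|λ⟩ = ∑ k, lam k • (f k ⊗ e k)`
            (∀ (b : B) (c : A) (b' : B) (c' : A),
              E (b, c) (b', c') =
                ∑ y : Fin m,
                  (∑ k : A, (lam k : ℂ) * f k (b, y) * e k c) *
                  (starRingEnd ℂ) (∑ k : A, (lam k : ℂ) * f k (b', y) * e k c')) ∧
            -- `(1_A ⊗ Π)(T ⊗ 1_{B'})(1_A ⊗ Π) = |τ⟩⟨τ|`,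
            -- with `Π = ∑ k, f k (f k)†` and `|τ⟩ = √p ∑ k, (1/lam k) • (e k ⊗ f k)`
            ((Matrix.of fun z z' : A × (B × Fin m) =>
                (if z.1 = z'.1 then (1 : ℂ) else 0) *
                  ∑ k : A, f k z.2 * (starRingEnd ℂ) (f k z'.2)) *
             (Matrix.of fun z z' : A × (B × Fin m) =>
                T (z.1, z.2.1) (z'.1, z'.2.1) *
                  (if z.2.2 = z'.2.2 then (1 : ℂ) else 0)) *
             (Matrix.of fun z z' : A × (B × Fin m) =>
                (if z.1 = z'.1 then (1 : ℂ) else 0) *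
                  ∑ k : A, f k z.2 * (starRingEnd ℂ) (f k z'.2))
            = Matrix.of fun z z' : A × (B × Fin m) =>
                (((Real.sqrt p : ℝ) : ℂ) *
                    ∑ k : A, (1 / (lam k : ℂ)) * e k z.1 * f k z.2) *
                (starRingEnd ℂ)
                  (((Real.sqrt p : ℝ) : ℂ) *
                    ∑ k : A, (1 / (lam k : ℂ)) * e k z'.1 * f k z'.2))) := by
  have hpC : (p : ℂ) ≠ 0 := Complex.ofReal_ne_zero.mpr hp0.ne'
  rw [teleMap_eq_smul_iff]
  constructor
  · intro h
    refine ⟨card_le_of_teleBlock_eq hT.1 hE.1 hpC h, ?_⟩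
    obtain ⟨m, v, hv⟩ := Matrix.posSemidef_iff_eq_sum_vecMulVec.mp hE.1
    let L : Matrix (B × Fin m) A ℂ := Matrix.of fun x c => v x.2 (x.1, c)
    have hL : ∀ b c b' c', E (b, c) (b', c') = ∑ y, L (b, y) c * star (L (b', y) c') := by
      intro b c b' c'
      simp [hv, L, Matrix.sum_apply, Matrix.vecMulVec_apply]
    have hm : 0 < m := by
      rcases Nat.eq_zero_or_pos m with rfl | hm
      · have := hE.2
        simp [hv] at this
      · exact hm
    have hcomp := fun a a' => (teleBlock_eq_of_purification L hL a a').symm.trans (h a a')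
    have hinj : Function.Injective L.mulVec := by
      refine (injective_iff_map_eq_zero L.mulVecLin).mpr fun w hw => ?_
      ext a
      have h1 := congrFun (congrArg (fun M : Matrix A A ℂ => M.mulVec w) (hcomp a a)) a
      simp only [← Matrix.mulVec_mulVec] at h1
      rw [show L.mulVec w = 0 from hw] at h1
      simpa [Matrix.smul_mulVec, Matrix.single_mulVec, hpC] using h1.symm
    obtain ⟨lam, F, U, hlam, hF, hU, hLF⟩ := Matrix.exists_svd_of_injective L hinj
    rw [hLF] at hcomp
    have hcomp' := fun a a' =>
      (compression_eq_iff_of_svd T hlam hU hp0.le a a').mp (hcomp a a')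
    refine ⟨lam, hlam, sum_sq_eq_one_of_purification hE.2 hF hU hLF hL,
      sum_inv_sq_le_of_compression_eq hT.2 hlam hF hU hp0 hcomp', m, hm,
      fun k c => U k c, fun k x => F x k, ?_, ?_, ?_, ?_⟩
    · intro k l
      have := congrFun₂ hU l k
      simpa [Matrix.mul_apply, Matrix.one_apply, mul_comm, eq_comm] using this
    · intro k l
      have := congrFun₂ hF k l
      simpa [Matrix.mul_apply, Matrix.one_apply] using this
    · intro b c b' c'
      rw [hL, hLF]
      simp [Matrix.mul_apply (N := U), Matrix.mul_diagonal, mul_comm]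
    · have := (ancilla_conj_eq_iff T F hF
        (fun k a => (Real.sqrt p : ℂ) * (1 / (lam k : ℂ)) * U k a)).mpr hcomp'
      simpa only [Finset.mul_sum, mul_assoc] using this
  · rintro ⟨-, lam, hlam, -, -, m, -, e, f, he, hf, hEL, hτ⟩ a a'
    let F : Matrix (B × Fin m) A ℂ := Matrix.of fun x k => f k x
    let U : Matrix A A ℂ := Matrix.of e
    have hF : F.conjTranspose * F = 1 := by
      ext k l
      simpa [F, Matrix.mul_apply, Matrix.one_apply] using hf k l
    have hU : U * U.conjTranspose = 1 := by
      ext k l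
      simpa [U, Matrix.mul_apply, Matrix.one_apply, mul_comm, eq_comm] using he l k
    have hL : ∀ b c b' c', E (b, c) (b', c') =
        ∑ y, (F * Matrix.diagonal (fun k => (lam k : ℂ)) * U) (b, y) c *
          star ((F * Matrix.diagonal (fun k => (lam k : ℂ)) * U) (b', y) c') := by
      intro b c b' c'
      rw [hEL]
      simp [Matrix.mul_apply (N := U), Matrix.mul_diagonal, mul_comm, F, U]
    rw [teleBlock_eq_of_purification _ hL, compression_eq_iff_of_svd T hlam hU hp0.le]
    refine (ancilla_conj_eq_iff T F hF
      (fun k a => (Real.sqrt p : ℂ) * (1 / (lam k : ℂ)) * U k a)).mp ?_ a a'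
    simpa only [F, U, Matrix.of_apply, Finset.mul_sum, mul_assoc] using hτ
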